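/- arXiv:2304.03539 — 10 statements merged into one kernel-verified Lean document; each statement's English description precedes it below -/
import Mathlib

section
/- J coincides with the set of skew-adjoint endomorphisms vanishing on H: J = {λ ∈ End_E(V) | H ⊆ ker λ and B(λ(x), x') = −B(x, λ(x')) for all x, x' ∈ V}. -/
/-- A subspace of codimension one together with some vector spans the whole space. -/
theorem exists_forall_eq_add_smul_of_finrank_add_one {E V : Type*} [Field E] [AddCommGroup V]
    [Module E V] [FiniteDimensional E V] {H : Submodule E V}
    (hH : Module.finrank E H + 1 = Module.finrank E V) :
    ∃ v : V, ∀ x : V, ∃ h ∈ H, ∃ a : E, x = h + a • v := by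
  have hne : H ≠ ⊤ := by
    rintro rfl
    simp at hH
  obtain ⟨v, -, hv⟩ := SetLike.exists_of_lt hne.lt_top
  have hlt : H < H ⊔ Submodule.span E {v} :=
    lt_of_le_of_ne le_sup_left fun heq =>
      hv (heq ▸ Submodule.mem_sup_right (Submodule.mem_span_singleton_self v))
  have htop : H ⊔ Submodule.span E {v} = ⊤ := by
    apply Submodule.eq_top_of_finrank_eq
    have := Submodule.finrank_lt_finrank_of_lt hlt
    have := Submodule.finrank_le (H ⊔ Submodule.span E {v})
    omega
  refine ⟨v, fun x => ?_⟩
  obtain ⟨h, hh, w, hw, rfl⟩ := Submodule.mem_sup.mp (htop ▸ Submodule.mem_top : x ∈ _)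
  obtain ⟨a, rfl⟩ := Submodule.mem_span_singleton.mp hw
  exact ⟨h, hh, a, rfl⟩

/-- `J` coincides with the set of skew-adjoint endomorphisms vanishing on `H`. -/
theorem stmt3 {E V : Type*} [Field E] [AddCommGroup V] [Module E V]
    [FiniteDimensional E V] (hchar : (2 : E) ≠ 0)
    (B : LinearMap.BilinForm E V) (hB : B.Nondegenerate) (halt : B.IsAlt)
    (H : Submodule E V) (hH : Module.finrank E H + 1 = Module.finrank E V) :
    {l : Module.End E V | H ≤ LinearMap.ker l ∧ LinearMap.range l ≤ B.orthogonal H}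
      = {l : Module.End E V |
          H ≤ LinearMap.ker l ∧ ∀ x x' : V, B (l x) x' = - B x (l x')} := by
  ext l
  simp only [Set.mem_ofPred_eq]
  refine and_congr_right fun hker => ⟨fun hrange => ?_, fun hskew => ?_⟩
  · obtain ⟨v, hv⟩ := exists_forall_eq_add_smul_of_finrank_add_one hH
    have hleft : ∀ h ∈ H, B h (l v) = 0 := fun h hh =>
      LinearMap.BilinForm.mem_orthogonal_iff.mp (hrange ⟨v, rfl⟩) h hh
    have hright : ∀ h ∈ H, B (l v) h = 0 := fun h hh => by
      rw [← halt.neg_eq, hleft h hh, neg_zero]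
    intro x x'
    obtain ⟨h, hh, a, rfl⟩ := hv x
    obtain ⟨h', hh', a', rfl⟩ := hv x'
    have hl : l h = 0 := hker hh
    have hl' : l h' = 0 := hker hh'
    have hswap : B (l v) v = -B v (l v) := (halt.neg_eq v (l v)).symm
    simp only [map_add, map_smul, hl, hl', zero_add, LinearMap.add_apply, LinearMap.smul_apply,
      smul_eq_mul, hleft h hh, hright h' hh', hswap]
    ring
  · rintro _ ⟨x, rfl⟩
    refine LinearMap.BilinForm.mem_orthogonal_iff.mpr fun h hh => ?_
    have hl : l h = 0 := hker hh
    have hzero := hskew h x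
    rw [hl, map_zero, LinearMap.zero_apply] at hzero
    exact neg_eq_zero.mp hzero.symm
end

section
/- The set of composites {g ∘ h | g, h ∈ End_E(V), range g ⊆ H^⊥, H ⊆ ker h} is exactly equal to J; in particular every λ ∈ J can be written as λ = g ∘ h with range g ⊆ H^⊥ and H ⊆ ker h, and every such product lies in J. -/
/-- An endomorphism `l` vanishing on a subspace `H` factors as `l ∘ h` with `h` vanishing on `H`. -/
theorem exists_le_ker_eq_comp {E V : Type*} [Field E] [AddCommGroup V] [Module E V]
    {H : Submodule E V} {l : Module.End E V} (hl : H ≤ LinearMap.ker l) :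
    ∃ h : Module.End E V, H ≤ LinearMap.ker h ∧ l = l ∘ₗ h := by
  obtain ⟨q, hq⟩ := H.subtype.exists_leftInverse_of_injective H.ker_subtype
  refine ⟨LinearMap.id - H.subtype ∘ₗ q, fun x hx => ?_, LinearMap.ext fun x => ?_⟩
  · have hqx : q x = ⟨x, hx⟩ := LinearMap.congr_fun hq ⟨x, hx⟩
    simp [hqx]
  · have hlq : l (q x) = 0 := hl (q x).2
    simp [hlq]

/-- The set of composites `g ∘ h` with `range g ⊆ H^⊥` and `H ⊆ ker h` is exactly `J`. -/
theorem stmt5 {E V : Type*} [Field E] [AddCommGroup V] [Module E V]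
    [FiniteDimensional E V] (hchar : (2 : E) ≠ 0)
    (B : LinearMap.BilinForm E V) (hB : B.Nondegenerate) (halt : B.IsAlt)
    (H : Submodule E V) (hH : Module.finrank E H + 1 = Module.finrank E V) :
    {f : Module.End E V | ∃ g h : Module.End E V,
        LinearMap.range g ≤ B.orthogonal H ∧ H ≤ LinearMap.ker h ∧ f = g ∘ₗ h}
      = {l : Module.End E V |
          H ≤ LinearMap.ker l ∧ LinearMap.range l ≤ B.orthogonal H} := by
  ext l
  constructor
  · rintro ⟨g, h, hg, hh, rfl⟩
    exact ⟨hh.trans (LinearMap.ker_le_ker_comp h g), (LinearMap.range_comp_le_range h g).trans hg⟩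
  · rintro ⟨hker, hrange⟩
    obtain ⟨h, hh, hl⟩ := exists_le_ker_eq_comp hker
    exact ⟨l, h, hrange, hh, hl⟩
end

section
/- Fix λ₀ ∈ J with λ₀ ≠ 0 and μ ∈ End_E(V) with trace(λ₀ ∘ μ) = 1 (such μ exists since the trace bilinear form on End_E(V) is nondegenerate). Then the E-linear map can : I ⊗_E I' → J ⊗_E End_E(V) determined on elementary tensors by ξ ⊗ ζ ↦ λ₀ ⊗ (ξ ∘ μ ∘ ζ) is bijective. -/
open TensorProduct

section RankOne

variable {E V : Type*} [Field E] [AddCommGroup V] [Module E V]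

theorem Submodule.exists_ker_eq_of_finrank_add_one_eq [FiniteDimensional E V]
    {H : Submodule E V} (hH : Module.finrank E H + 1 = Module.finrank E V) :
    ∃ f : Module.Dual E V, f ≠ 0 ∧ LinearMap.ker f = H := by
  have hlt : H < ⊤ := by
    refine lt_top_iff_ne_top.mpr fun h => ?_
    rw [h, finrank_top] at hH
    omega
  obtain ⟨f, hf, hle⟩ := H.exists_le_ker_of_lt_top hlt
  refine ⟨f, hf, (Submodule.eq_of_le_of_finrank_eq hle ?_).symm⟩
  have := Module.Dual.finrank_ker_add_one_of_ne_zero hf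
  omega

theorem Submodule.exists_eq_span_singleton_of_finrank_eq_one
    {W : Submodule E V} (hW : Module.finrank E W = 1) :
    ∃ w : V, w ≠ 0 ∧ W = E ∙ w := by
  obtain ⟨w, hw, h⟩ := finrank_eq_one_iff'.mp hW
  refine ⟨w, by simpa using hw, le_antisymm (fun x hx => ?_) (by simp)⟩
  obtain ⟨c, hc⟩ := h ⟨x, hx⟩
  exact Submodule.mem_span_singleton.mpr ⟨c, congrArg Subtype.val hc⟩

namespace LinearMap

theorem ker_le_ker_iff_mem_range_smulRight {f : Module.Dual E V} (hf : f ≠ 0)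
    (l : Module.End E V) :
    ker f ≤ ker l ↔ l ∈ range (smulRightₗ f : V →ₗ[E] V →ₗ[E] V) := by
  constructor
  · intro h
    obtain ⟨e, he⟩ := LinearMap.surjective hf 1
    refine ⟨l e, LinearMap.ext fun x => ?_⟩
    have hx : x - f x • e ∈ ker l := h (by simp [he])
    simpa using (sub_eq_zero.mp (by simpa using hx : l x - f x • l e = 0)).symm
  · rintro ⟨v, rfl⟩ x hx
    have hx' : f x = 0 := hx
    simp [hx']

theorem range_le_span_singleton_iff_mem_range_smulRight {w : V} (hw : w ≠ 0)
    (l : Module.End E V) :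
    range l ≤ (E ∙ w) ↔
      l ∈ range ((smulRightₗ : Module.Dual E V →ₗ[E] V →ₗ[E] V →ₗ[E] V).flip w) := by
  constructor
  · intro h
    let e := LinearEquiv.toSpanNonzeroSingleton E V w hw
    refine ⟨e.symm.toLinearMap ∘ₗ l.codRestrict (E ∙ w) fun x => h ⟨x, rfl⟩,
      LinearMap.ext fun x => ?_⟩
    simp [e]
  · rintro ⟨φ, rfl⟩ _ ⟨x, rfl⟩
    exact Submodule.mem_span_singleton.mpr ⟨φ x, by simp⟩

theorem smulRightₗ_injective {f : Module.Dual E V} (hf : f ≠ 0) :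
    Function.Injective (smulRightₗ f : V →ₗ[E] V →ₗ[E] V) := by
  intro v v' h
  obtain ⟨e, he⟩ := LinearMap.surjective hf 1
  simpa [he] using LinearMap.congr_fun h e

theorem smulRightₗ_flip_injective {w : V} (hw : w ≠ 0) :
    Function.Injective
      ((smulRightₗ : Module.Dual E V →ₗ[E] V →ₗ[E] V →ₗ[E] V).flip w) := by
  intro φ φ' h
  ext x
  have := LinearMap.congr_fun h x
  exact smul_left_injective E hw (by simpa using this)

theorem range_smulRight_inf_range_smulRight_flip {f : Module.Dual E V} (hf : f ≠ 0)
    {w : V} (hw : w ≠ 0) :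
    range (smulRightₗ f : V →ₗ[E] V →ₗ[E] V) ⊓
      range ((smulRightₗ : Module.Dual E V →ₗ[E] V →ₗ[E] V →ₗ[E] V).flip w) =
        E ∙ (f.smulRight w : Module.End E V) := by
  apply le_antisymm
  · rintro l ⟨⟨v, rfl⟩, hl⟩
    obtain ⟨e, he⟩ := LinearMap.surjective hf 1
    have hv : v ∈ E ∙ w :=
      (range_le_span_singleton_iff_mem_range_smulRight hw _).mpr hl ⟨e, by simp [he]⟩
    obtain ⟨c, rfl⟩ := Submodule.mem_span_singleton.mp hv
    exact Submodule.mem_span_singleton.mpr ⟨c, by ext x; simp [smul_comm c]⟩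
  · rw [Submodule.span_singleton_le_iff_mem]
    exact ⟨⟨w, rfl⟩, ⟨f, rfl⟩⟩

end LinearMap

end RankOne


/-- Fix `λ₀ ∈ J` nonzero and `μ ∈ End_E(V)` with `trace(λ₀ ∘ μ) = 1`. Then the `E`-linear map
`can : I ⊗_E I' → J ⊗_E End_E(V)` determined on elementary tensors by
`ξ ⊗ ζ ↦ λ₀ ⊗ (ξ ∘ μ ∘ ζ)` is bijective. -/
theorem stmt6 {E V : Type*} [Field E] [AddCommGroup V] [Module E V]
    [FiniteDimensional E V] (hchar : (2 : E) ≠ 0)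
    (B : LinearMap.BilinForm E V) (hB : B.Nondegenerate) (halt : B.IsAlt)
    (H : Submodule E V) (hH : Module.finrank E H + 1 = Module.finrank E V)
    (I I' J : Submodule E (Module.End E V))
    (hI : ∀ l : Module.End E V, l ∈ I ↔ H ≤ LinearMap.ker l)
    (hI' : ∀ l : Module.End E V, l ∈ I' ↔ LinearMap.range l ≤ B.orthogonal H)
    (hJ : J = I ⊓ I')
    (lam0 : Module.End E V) (hlam0J : lam0 ∈ J) (hlam0 : lam0 ≠ 0)
    (mu : Module.End E V) (htr : LinearMap.trace E V (lam0 ∘ₗ mu) = 1)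
    (can : (↥I ⊗[E] ↥I') →ₗ[E] (↥J ⊗[E] Module.End E V))
    (hcan : ∀ (ξ : ↥I) (ζ : ↥I'),
      can (ξ ⊗ₜ[E] ζ) = (⟨lam0, hlam0J⟩ : ↥J) ⊗ₜ[E]
        ((ξ : Module.End E V) ∘ₗ mu ∘ₗ (ζ : Module.End E V))) :
    Function.Bijective can := by
  obtain ⟨f, hf, rfl⟩ := Submodule.exists_ker_eq_of_finrank_add_one_eq hH
  obtain ⟨w, hw, hperp⟩ := Submodule.exists_eq_span_singleton_of_finrank_eq_one
    (W := B.orthogonal (LinearMap.ker f)) (by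
      rw [LinearMap.BilinForm.finrank_orthogonal hB]
      omega)
  have hIr : I = LinearMap.range (LinearMap.smulRightₗ f : V →ₗ[E] V →ₗ[E] V) :=
    Submodule.ext fun l =>
      (hI l).trans (LinearMap.ker_le_ker_iff_mem_range_smulRight hf l)
  have hI'r : I' = LinearMap.range
      ((LinearMap.smulRightₗ : Module.Dual E V →ₗ[E] V →ₗ[E] V →ₗ[E] V).flip w) :=
    Submodule.ext fun l => by
      rw [hI', hperp, LinearMap.range_le_span_singleton_iff_mem_range_smulRight hw]
  rw [hIr, hI'r, LinearMap.range_smulRight_inf_range_smulRight_flip hf hw] at hJ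
  obtain ⟨c, hc⟩ := Submodule.mem_span_singleton.mp (hJ ▸ hlam0J)
  have hcf : c * f (mu w) = 1 := by
    rw [← htr, LinearMap.trace_comp_comm', ← hc]
    have : mu ∘ₗ (c • (f.smulRight w : Module.End E V)) = c • f.smulRight (mu w) := by
      ext x
      simp
    rw [this, map_smul, LinearMap.trace_smulRight, smul_eq_mul]
  have hspan : J = E ∙ lam0 := by
    rw [hJ, ← hc, Submodule.span_singleton_smul_eq (left_ne_zero_of_mul_eq_one hcf).isUnit]
  have hdim : Module.finrank E (I ⊗[E] I') = Module.finrank E (J ⊗[E] Module.End E V) := by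
    rw [Module.finrank_tensorProduct, Module.finrank_tensorProduct, hIr, hI'r,
      LinearMap.finrank_range_of_inj (LinearMap.smulRightₗ_injective hf),
      LinearMap.finrank_range_of_inj (LinearMap.smulRightₗ_flip_injective hw),
      Subspace.dual_finrank_eq, hspan, finrank_span_singleton hlam0, one_mul,
      Module.finrank_linearMap]
  have hrankOne (φ : Module.Dual E V) (v : V) :
      (⟨lam0, hlam0J⟩ : J) ⊗ₜ[E] (φ.smulRight v : Module.End E V) ∈ LinearMap.range can := by
    refine ⟨⟨f.smulRight (c • v), hIr ▸ ⟨_, rfl⟩⟩ ⊗ₜ ⟨φ.smulRight w, hI'r ▸ ⟨φ, rfl⟩⟩,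
      (hcan _ _).trans (congrArg _ ?_)⟩
    ext x
    have hscalar : φ x * f (mu w) * c = φ x := by
      rw [mul_assoc, mul_comm (f _), hcf, mul_one]
    simp [smul_smul, hscalar]
  have hsurj : Function.Surjective can := by
    rw [← LinearMap.range_eq_top, eq_top_iff, ← TensorProduct.span_tmul_eq_top,
      Submodule.span_le]
    rintro _ ⟨⟨l, hl⟩, A, rfl⟩
    obtain ⟨d, rfl⟩ := Submodule.mem_span_singleton.mp (hspan ▸ hl)
    have hsmul : (⟨d • lam0, hl⟩ : J) = d • ⟨lam0, hlam0J⟩ := rfl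
    rw [hsmul, ← TensorProduct.smul_tmul']
    refine Submodule.smul_mem _ d ?_
    obtain ⟨t, rfl⟩ := (dualTensorHomEquiv E V V).surjective A
    induction t with
    | zero => simp
    | add s t hs ht =>
      rw [map_add, TensorProduct.tmul_add]
      exact add_mem hs ht
    | tmul φ v =>
      convert hrankOne φ v using 2
      ext x
      simp [dualTensorHom_apply]
  have hiff : Function.Injective can ↔ Function.Surjective can :=
    LinearMap.injective_iff_surjective_of_finrank_eq_finrank (V := I ⊗[E] I')
      (V₂ := J ⊗[E] Module.End E V) hdim
  exact ⟨hiff.mpr hsurj, hsurj⟩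
end

section
/- The map can is independent of the choices made in its definition: for any nonzero λ₀, λ₀' ∈ J and any μ, μ' ∈ End_E(V) with trace(λ₀ ∘ μ) = trace(λ₀' ∘ μ') = 1, and for all ξ ∈ I and ζ ∈ I', one has λ₀' ⊗ (ξ ∘ μ' ∘ ζ) = λ₀ ⊗ (ξ ∘ μ ∘ ζ) in J ⊗_E End_E(V). -/
open TensorProduct

/-- A hyperplane is the kernel of a linear form taking the value `1`. -/
theorem Submodule.exists_dual_ker_eq_of_finrank_add_one {E V : Type*} [Field E] [AddCommGroup V]
    [Module E V] [FiniteDimensional E V] (H : Submodule E V)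
    (hH : Module.finrank E H + 1 = Module.finrank E V) :
    ∃ (f : V →ₗ[E] E) (v : V), LinearMap.ker f = H ∧ f v = 1 := by
  have hquot : Module.finrank E (V ⧸ H) = Module.finrank E E := by
    have := H.finrank_quotient_add_finrank
    rw [Module.finrank_self]
    omega
  let e := LinearEquiv.ofFinrankEq (V ⧸ H) E hquot
  obtain ⟨v, hv⟩ := H.mkQ_surjective (e.symm 1)
  exact ⟨e.toLinearMap ∘ₗ H.mkQ, v, by rw [LinearEquiv.ker_comp, H.ker_mkQ], by simp [hv]⟩

/-- The orthogonal of a hyperplane for a nondegenerate bilinear form is a line. -/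
theorem LinearMap.BilinForm.exists_orthogonal_eq_span_singleton {E V : Type*} [Field E]
    [AddCommGroup V] [Module E V] [FiniteDimensional E V] {B : LinearMap.BilinForm E V}
    (hB : B.Nondegenerate) (H : Submodule E V)
    (hH : Module.finrank E H + 1 = Module.finrank E V) :
    ∃ w : V, B.orthogonal H = Submodule.span E {w} := by
  have hline : Module.finrank E (B.orthogonal H) = 1 := by
    rw [LinearMap.BilinForm.finrank_orthogonal hB]
    omega
  obtain ⟨w, -, hw⟩ := finrank_eq_one_iff'.mp hline
  refine ⟨w, le_antisymm (fun y hy => ?_) ?_⟩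
  · obtain ⟨c, hc⟩ := hw ⟨y, hy⟩
    exact Submodule.mem_span_singleton.mpr ⟨c, congrArg Subtype.val hc⟩
  · exact (Submodule.span_singleton_le_iff_mem _ _).mpr w.2

/-- A linear map vanishing on the kernel of `f` factors through `f`. -/
theorem LinearMap.apply_eq_smul_of_ker_le {E V W : Type*} [Field E] [AddCommGroup V]
    [Module E V] [AddCommGroup W] [Module E W] {f : V →ₗ[E] E} {v : V} (hv : f v = 1)
    {l : V →ₗ[E] W} (hl : LinearMap.ker f ≤ LinearMap.ker l) (x : V) : l x = f x • l v := by
  have hx : x - f x • v ∈ LinearMap.ker f := by simp [hv]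
  simpa [sub_eq_zero] using hl hx

/-- The map `can` is independent of the choices made in its definition: for nonzero
`λ₀, λ₀' ∈ J` and `μ, μ' ∈ End_E(V)` with `trace(λ₀ ∘ μ) = trace(λ₀' ∘ μ') = 1`, and for all
`ξ ∈ I`, `ζ ∈ I'`, one has `λ₀' ⊗ (ξ ∘ μ' ∘ ζ) = λ₀ ⊗ (ξ ∘ μ ∘ ζ)` in `J ⊗_E End_E(V)`. -/
theorem stmt7 {E V : Type*} [Field E] [AddCommGroup V] [Module E V]
    [FiniteDimensional E V] (hchar : (2 : E) ≠ 0)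
    (B : LinearMap.BilinForm E V) (hB : B.Nondegenerate) (halt : B.IsAlt)
    (H : Submodule E V) (hH : Module.finrank E H + 1 = Module.finrank E V)
    (I I' J : Submodule E (Module.End E V))
    (hI : ∀ l : Module.End E V, l ∈ I ↔ H ≤ LinearMap.ker l)
    (hI' : ∀ l : Module.End E V, l ∈ I' ↔ LinearMap.range l ≤ B.orthogonal H)
    (hJ : J = I ⊓ I')
    (lam0 lam0' : Module.End E V) (hlam0J : lam0 ∈ J) (hlam0'J : lam0' ∈ J)
    (hlam0 : lam0 ≠ 0) (hlam0' : lam0' ≠ 0)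
    (mu mu' : Module.End E V)
    (htr : LinearMap.trace E V (lam0 ∘ₗ mu) = 1)
    (htr' : LinearMap.trace E V (lam0' ∘ₗ mu') = 1)
    (ξ ζ : Module.End E V) (hξ : ξ ∈ I) (hζ : ζ ∈ I') :
    ((⟨lam0', hlam0'J⟩ : ↥J) ⊗ₜ[E] (ξ ∘ₗ mu' ∘ₗ ζ) : ↥J ⊗[E] Module.End E V)
      = (⟨lam0, hlam0J⟩ : ↥J) ⊗ₜ[E] (ξ ∘ₗ mu ∘ₗ ζ) := by
  obtain ⟨f, v, hf, hv⟩ := H.exists_dual_ker_eq_of_finrank_add_one hH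
  obtain ⟨w, hw⟩ := LinearMap.BilinForm.exists_orthogonal_eq_span_singleton hB H hH
  subst hJ
  have hL : f.smulRight w ∈ I ⊓ I' := by
    refine ⟨(hI _).mpr fun x hx => ?_, (hI' _).mpr ?_⟩
    · rw [← hf, LinearMap.mem_ker] at hx
      simp [hx]
    · rintro _ ⟨x, rfl⟩
      rw [hw]
      exact Submodule.smul_mem _ _ (Submodule.mem_span_singleton_self w)
  have factor_of_mem_I (l : Module.End E V) (hl : l ∈ I) (x : V) : l x = f x • l v :=
    LinearMap.apply_eq_smul_of_ker_le hv (hf.trans_le ((hI l).mp hl)) x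
  have apply_mem_line (l : Module.End E V) (hl : l ∈ I') (x : V) : ∃ c : E, c • w = l x := by
    have hx := (hI' l).mp hl ⟨x, rfl⟩
    rwa [hw, Submodule.mem_span_singleton] at hx
  have eq_smul_of_mem_J (l m : Module.End E V) (hl : l ∈ I ⊓ I')
      (htr : LinearMap.trace E V (l ∘ₗ m) = 1) :
      ∃ c : E, (⟨l, hl⟩ : ↥(I ⊓ I')) = c • ⟨f.smulRight w, hL⟩ ∧ c * f (m w) = 1 := by
    obtain ⟨c, hc⟩ := apply_mem_line l hl.2 v
    have hlc : l = c • f.smulRight w := by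
      ext x
      simp [factor_of_mem_I l hl.1 x, ← hc, smul_comm c]
    refine ⟨c, Subtype.ext hlc, ?_⟩
    have hcomp : l ∘ₗ m = c • (f ∘ₗ m).smulRight w := by
      rw [hlc]
      rfl
    rwa [hcomp, map_smul, LinearMap.trace_smulRight] at htr
  obtain ⟨c, hc, hcm⟩ := eq_smul_of_mem_J lam0 mu hlam0J htr
  obtain ⟨c', hc', hcm'⟩ := eq_smul_of_mem_J lam0' mu' hlam0'J htr'
  have hcross : f (mu w) • (ξ ∘ₗ mu' ∘ₗ ζ) = f (mu' w) • (ξ ∘ₗ mu ∘ₗ ζ) := by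
    ext x
    obtain ⟨g, hg⟩ := apply_mem_line ζ hζ x
    simp only [LinearMap.smul_apply, LinearMap.comp_apply, ← hg, map_smul,
      factor_of_mem_I ξ hξ (mu w), factor_of_mem_I ξ hξ (mu' w), smul_smul]
    congr 1
    ring
  have hsmul : c' • (ξ ∘ₗ mu' ∘ₗ ζ) = c • (ξ ∘ₗ mu ∘ₗ ζ) := by
    calc c' • (ξ ∘ₗ mu' ∘ₗ ζ) = (c' * c) • f (mu w) • (ξ ∘ₗ mu' ∘ₗ ζ) := by
          rw [smul_smul, mul_assoc, hcm, mul_one]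
      _ = c • (ξ ∘ₗ mu ∘ₗ ζ) := by
          rw [hcross, smul_smul, mul_right_comm, hcm', one_mul]
  rw [hc, hc', TensorProduct.smul_tmul, TensorProduct.smul_tmul, hsmul]
end

section
/- The element e satisfies e * e = 0 and star e = −e, where star denotes quaternion conjugation. -/
open Quaternion

/-- In the quaternion algebra `ℍ[F,a,b]` (with `i² = a`, `j² = b`, `ij = -ji = k`),
if `y² = a·x² + b` then `e = b·i + (a·x)·j + y·k` satisfies `e * e = 0` and
`star e = -e`, where `star` is quaternion conjugation. -/
theorem stmt8 {F : Type*} [Field F] (hchar : (2 : F) ≠ 0) (a b x y : F)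
    (hxy : y ^ 2 = a * x ^ 2 + b) :
    (⟨0, b, a * x, y⟩ : ℍ[F, a, b]) * (⟨0, b, a * x, y⟩ : ℍ[F, a, b]) = 0 ∧
      star (⟨0, b, a * x, y⟩ : ℍ[F, a, b]) = -(⟨0, b, a * x, y⟩ : ℍ[F, a, b]) := by
  constructor
  · ext
    · simp only [QuaternionAlgebra.re_mul, QuaternionAlgebra.re_zero]
      linear_combination (-a * b) * hxy
    · simp only [QuaternionAlgebra.imI_mul, QuaternionAlgebra.imI_zero]
      ring
    · simp only [QuaternionAlgebra.imJ_mul, QuaternionAlgebra.imJ_zero]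
      ring
    · simp only [QuaternionAlgebra.imK_mul, QuaternionAlgebra.imK_zero]
      ring
  · ext <;> simp
end

section
/- Assume b ≠ 0. Then the left ideal {d * e | d ∈ ℍ[F,a,b]} generated by e equals the F-linear span of {j*e, (i*j)*e}; if moreover x ≠ 0, it also equals the F-linear span of {e, j*e}. -/
open Quaternion

/-- The set of left multiples of `e` is the span of two of its elements `u` and `v` as soon as every
left multiple of `e` is a linear combination of `u` and `v`. -/
theorem setOf_left_multiples_eq_span_pair {R A : Type*} [CommSemiring R] [Semiring A]
    [Algebra R A] {e u v : A} (hu : ∃ d, u = d * e) (hv : ∃ d, v = d * e)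
    (h : ∀ d : A, ∃ r s : R, r • u + s • v = d * e) :
    {t : A | ∃ d : A, t = d * e} = ↑(Submodule.span R {u, v}) := by
  obtain ⟨p, rfl⟩ := hu
  obtain ⟨q, rfl⟩ := hv
  ext t
  rw [Set.mem_ofPred_eq, SetLike.mem_coe, Submodule.mem_span_pair]
  constructor
  · rintro ⟨d, rfl⟩
    exact h d
  · rintro ⟨r, s, rfl⟩
    exact ⟨r • p + s • q, by simp only [add_mul, smul_mul_assoc]⟩

/-- In `ℍ[F,a,b]`, with `y² = a·x² + b`, `e = b·i + (a·x)·j + y·k` and `b ≠ 0`, the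
left ideal `{d * e | d ∈ ℍ[F,a,b]}` equals the `F`-linear span of `{j*e, (i*j)*e}`;
if moreover `x ≠ 0`, it also equals the `F`-linear span of `{e, j*e}`. -/
theorem stmt9 {F : Type*} [Field F] (hchar : (2 : F) ≠ 0) (a b x y : F)
    (hxy : y ^ 2 = a * x ^ 2 + b) (hb : b ≠ 0)
    (i j e : ℍ[F, a, b]) (hi : i = ⟨0, 1, 0, 0⟩) (hj : j = ⟨0, 0, 1, 0⟩)
    (he : e = ⟨0, b, a * x, y⟩) :
    {t : ℍ[F, a, b] | ∃ d : ℍ[F, a, b], t = d * e}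
        = ↑(Submodule.span F {j * e, (i * j) * e}) ∧
      (x ≠ 0 →
        {t : ℍ[F, a, b] | ∃ d : ℍ[F, a, b], t = d * e}
          = ↑(Submodule.span F {e, j * e})) := by
  have hie : i * e = (-(a * x) / b) • (j * e) + (-y / b) • ((i * j) * e) := by
    subst hi hj he
    ext <;> simp <;> field_simp <;> grind
  have he_eq : e = (-y / b) • (j * e) + (-x / b) • ((i * j) * e) := by
    subst hi hj he
    ext <;> simp <;> field_simp <;> grind
  have hd (d : ℍ[F, a, b]) :
      d * e = d.re • e + d.imI • (i * e) + d.imJ • (j * e) + d.imK • ((i * j) * e) := by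
    subst hi hj
    ext <;> simp <;> ring
  refine ⟨setOf_left_multiples_eq_span_pair ⟨j, rfl⟩ ⟨i * j, rfl⟩ fun d => ?_, fun hx =>
    setOf_left_multiples_eq_span_pair ⟨1, (one_mul e).symm⟩ ⟨j, rfl⟩ fun d => ?_⟩
  · refine ⟨d.re * (-y / b) + d.imI * (-(a * x) / b) + d.imJ,
      d.re * (-x / b) + d.imI * (-y / b) + d.imK, ?_⟩
    rw [hd d, hie]
    nth_rewrite 3 [he_eq]
    module
  · have hke : (i * j) * e = (-b / x) • e + (-y / x) • (j * e) := by
      nth_rewrite 2 [he_eq]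
      match_scalars <;> field_simp <;> ring
    refine ⟨d.re + (d.imI * (-y / b) + d.imK) * (-b / x),
      d.imI * (-(a * x) / b) + d.imJ + (d.imI * (-y / b) + d.imK) * (-y / x), ?_⟩
    rw [hd d, hie, hke]
    module
end

section
/- The module of affine sections of the tautological sheaf and of the line bundle L are as follows: (1) the set of t ∈ ℍ[F,a,b] such that t has all four coordinates in R and t = d * e for some d ∈ ℍ[F,a,b] equals {d * e | d ∈ ℍ[R,a,b]}; (2) the set of t ∈ ℍ[F,a,b] such that t has all four coordinates in R and t = e·λ for some λ ∈ F equals {e·λ | λ ∈ R}. -/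
open Polynomial Quaternion

/-- If `y² = ax² + b`, then the left ideal generated by `e = bi + axj + yk` is spanned over the
base ring by `e` and `i * e`. -/
theorem QuaternionAlgebra.mul_conicPoint {F : Type*} [CommRing F] {a b x y : F}
    (hxy : y ^ 2 = a * x ^ 2 + b) (d : ℍ[F, a, b]) :
    d * ⟨0, b, a * x, y⟩ =
      (⟨d.re - y * d.imJ + a * x * d.imK, d.imI + x * d.imJ - y * d.imK, 0, 0⟩ : ℍ[F, a, b]) *
        ⟨0, b, a * x, y⟩ := by
  ext <;> simp <;> grind

/-- Over a subring containing `a`, `b`, `x`, `y` and the inverses of `a` and `b`, a left multiple of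
`e = bi + axj + yk` has coordinates in the subring iff it is a multiple of `e` by a quaternion
with coordinates in the subring. -/
theorem QuaternionAlgebra.coords_mem_and_exists_mul_conicPoint_iff {F : Type*} [Field F]
    {a b x y : F} (S : Subring F) (ha : a ∈ S) (hb : b ∈ S) (hx : x ∈ S) (hy : y ∈ S)
    (ha' : a⁻¹ ∈ S) (hb' : b⁻¹ ∈ S) (ha0 : a ≠ 0) (hb0 : b ≠ 0)
    (hxy : y ^ 2 = a * x ^ 2 + b) (t : ℍ[F, a, b]) :
    ((t.re ∈ S ∧ t.imI ∈ S ∧ t.imJ ∈ S ∧ t.imK ∈ S) ∧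
        ∃ d : ℍ[F, a, b], t = d * ⟨0, b, a * x, y⟩) ↔
      ∃ d : ℍ[F, a, b], (d.re ∈ S ∧ d.imI ∈ S ∧ d.imJ ∈ S ∧ d.imK ∈ S) ∧
        t = d * ⟨0, b, a * x, y⟩ := by
  constructor
  · rintro ⟨⟨hre, hI, -, -⟩, d, rfl⟩
    rw [mul_conicPoint hxy] at hre hI
    refine ⟨_, ⟨?_, ?_, S.zero_mem, S.zero_mem⟩, mul_conicPoint hxy d⟩
    · convert S.mul_mem hb' hI using 1
      simp
      field_simp
    · convert S.mul_mem (S.mul_mem ha' hb') hre using 1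
      simp
      field_simp
  · rintro ⟨d, ⟨h0, h1, h2, h3⟩, rfl⟩
    refine ⟨⟨?_, ?_, ?_, ?_⟩, d, rfl⟩ <;> simp <;>
      apply_rules [S.add_mem, S.sub_mem, S.mul_mem, S.neg_mem]

/-- Let `R = k[X,Y]/(Y² − aX² − b)` (a domain, realized as `AdjoinRoot p`), `F` its fraction
field, `x, y ∈ R ⊆ F` the images of `X, Y`, and `e = b·i + (a·x)·j + y·k ∈ ℍ[F,a,b]`.
Writing `HR` for the subring of quaternions all of whose coordinates lie in `R`, one has:
(1) `{t ∈ ℍ[R] as coords | ∃ d ∈ ℍ[F], t = d·e} = ℍ[R]·e`;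
(2) `{t with coords in R | ∃ λ ∈ F, t = λ·e} = {λ·e | λ ∈ R}`. -/
theorem stmt10 {k : Type*} [Field k] (hchar : (2 : k) ≠ 0) (a b : k)
    (ha : a ≠ 0) (hb : b ≠ 0)
    (p : Polynomial (Polynomial k))
    (hp : p = X ^ 2 - C (C a * X ^ 2 + C b))
    (hIrr : Irreducible p) [IsDomain (AdjoinRoot p)]
    (F : Type*) [Field F] [Algebra (AdjoinRoot p) F] [IsFractionRing (AdjoinRoot p) F]
    [Algebra k F] [IsScalarTower k (AdjoinRoot p) F]
    (x y : F)
    (hx : x = algebraMap (AdjoinRoot p) F (AdjoinRoot.of p X))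
    (hy : y = algebraMap (AdjoinRoot p) F (AdjoinRoot.root p))
    (e : ℍ[F, algebraMap k F a, algebraMap k F b])
    (he : e = ⟨0, algebraMap k F b, algebraMap k F a * x, y⟩)
    (HR : Set ℍ[F, algebraMap k F a, algebraMap k F b])
    (hHR : ∀ d : ℍ[F, algebraMap k F a, algebraMap k F b],
      d ∈ HR ↔ (d.re ∈ (algebraMap (AdjoinRoot p) F).range ∧
        d.imI ∈ (algebraMap (AdjoinRoot p) F).range ∧
        d.imJ ∈ (algebraMap (AdjoinRoot p) F).range ∧
        d.imK ∈ (algebraMap (AdjoinRoot p) F).range)) :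
    ({t | t ∈ HR ∧ ∃ d, t = d * e} = {t | ∃ d ∈ HR, t = d * e}) ∧
      ({t | t ∈ HR ∧ ∃ lam : F, t = lam • e}
        = {t | ∃ r : AdjoinRoot p, t = algebraMap (AdjoinRoot p) F r • e}) := by
  set f := algebraMap (AdjoinRoot p) F
  have hmem (c : k) : algebraMap k F c ∈ f.range :=
    ⟨algebraMap k _ c, (IsScalarTower.algebraMap_apply k _ F c).symm⟩
  have hxmem : x ∈ f.range := ⟨_, hx.symm⟩
  have hymem : y ∈ f.range := ⟨_, hy.symm⟩
  have ha0 : algebraMap k F a ≠ 0 := by simpa using ha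
  have hb0 : algebraMap k F b ≠ 0 := by simpa using hb
  have hainv : (algebraMap k F a)⁻¹ ∈ f.range := map_inv₀ (algebraMap k F) a ▸ hmem a⁻¹
  have hbinv : (algebraMap k F b)⁻¹ ∈ f.range := map_inv₀ (algebraMap k F) b ▸ hmem b⁻¹
  have hC (c : k) : f (AdjoinRoot.of p (C c)) = algebraMap k F c :=
    (IsScalarTower.algebraMap_apply k (AdjoinRoot p) F c).symm
  have hxy : y ^ 2 = algebraMap k F a * x ^ 2 + algebraMap k F b := by
    have h := (congrArg (eval₂ (AdjoinRoot.of p) (AdjoinRoot.root p)) hp).symm.trans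
      (AdjoinRoot.eval₂_root p)
    simp only [eval₂_sub, eval₂_pow, eval₂_X, eval₂_C] at h
    have h' := congrArg f (sub_eq_zero.mp h)
    simpa only [map_add, map_mul, map_pow, hC, ← hx, ← hy] using h'
  subst he
  constructor
  · ext t
    simpa only [Set.mem_ofPred_eq, hHR] using
      QuaternionAlgebra.coords_mem_and_exists_mul_conicPoint_iff f.range (hmem a) (hmem b) hxmem
        hymem hainv hbinv ha0 hb0 hxy t
  · ext t
    simp only [Set.mem_ofPred_eq, hHR]
    constructor
    · rintro ⟨⟨-, hI, -, -⟩, lam, rfl⟩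
      obtain ⟨r, hr⟩ := f.range.mul_mem hI hbinv
      refine ⟨r, ?_⟩
      rw [hr]
      simp [hb0]
    · rintro ⟨r, rfl⟩
      have hr : f r ∈ f.range := ⟨r, rfl⟩
      exact ⟨⟨by simp, f.range.mul_mem hr (hmem b),
        f.range.mul_mem hr (f.range.mul_mem (hmem a) hxmem), f.range.mul_mem hr hymem⟩, _, rfl⟩
end

section
/- Assume in addition that D = ℍ[k,a,b] is a division ring (every nonzero quaternion over k is invertible). Let n ≥ 1 and let f = Σ_{α=0}^{n} c_α·x^α + Σ_{β=0}^{n−1} d_β·x^β·y ∈ R with c_α, d_β ∈ k and (c_n, d_{n−1}) ≠ (0, 0) (so that v_∞(f) = −n). Then the images of the elements e, e·x, …, e·x^{n−1} form a basis of the quotient of the right D-module e·ℍ[R,a,b] by the submodule f·(e·ℍ[R,a,b]), where D acts on e·ℍ[R,a,b] on the right through the inclusion ℍ[k,a,b] ⊆ ℍ[R,a,b]; that is, these n images are right-D-linearly independent modulo f·(e·ℍ[R,a,b]) and every element of e·ℍ[R,a,b] is congruent modulo f·(e·ℍ[R,a,b]) to a right D-linear combination of them. -/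
open Polynomial Quaternion

namespace QuaternionAlgebra

section BaseChange

variable {k F : Type*} [Field k] [Field F] [Algebra k F] (a b : k)

/-- The inclusion `ℍ[k,a,b] → ℍ[F,a,b]` induced by the structure map `k → F`. -/
def baseChange : ℍ[k, a, b] →+* ℍ[F, algebraMap k F a, algebraMap k F b] where
  toFun q := ⟨algebraMap k F q.re, algebraMap k F q.imI, algebraMap k F q.imJ,
    algebraMap k F q.imK⟩
  map_one' := by ext <;> simp
  map_zero' := by ext <;> simp
  map_mul' p q := by ext <;> simp
  map_add' p q := by ext <;> simp

/-- Evaluation of polynomials over `ℍ[k,a,b]` at a (central) element `x` of `F`. -/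
noncomputable def evalCentral (x : F) :
    ℍ[k, a, b][X] →+* ℍ[F, algebraMap k F a, algebraMap k F b] :=
  eval₂RingHom' (baseChange a b) (x : ℍ[F, algebraMap k F a, algebraMap k F b])
    fun _ => (QuaternionAlgebra.coe_commutes x _).symm

variable {a b}

theorem evalCentral_C (x : F) (q : ℍ[k, a, b]) :
    evalCentral a b x (C q) = baseChange a b q :=
  eval₂_C _ _

theorem evalCentral_X (x : F) :
    evalCentral a b x X = (x : ℍ[F, algebraMap k F a, algebraMap k F b]) :=
  eval₂_X _ _

theorem evalCentral_C_mul_X_pow (x : F) (q : ℍ[k, a, b]) (m : ℕ) :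
    evalCentral a b x (C q * X ^ m) = x ^ m • baseChange a b q := by
  rw [map_mul, map_pow, evalCentral_C, evalCentral_X, ← coe_pow, mul_coe_eq_smul]

theorem evalCentral_map (x : F) (u : k[X]) :
    evalCentral a b x (u.map (algebraMap k ℍ[k, a, b])) =
      (aeval x u : ℍ[F, algebraMap k F a, algebraMap k F b]) := by
  induction u using Polynomial.induction_on' with
  | add u v hu hv => simp [hu, hv]
  | monomial m c =>
    rw [map_monomial, ← C_mul_X_pow_eq_monomial, evalCentral_C_mul_X_pow, aeval_monomial,
      mul_comm, coe_mul, coe_mul_eq_smul]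
    congr 1
    ext <;> simp [baseChange]

/-- A polynomial over `ℍ[k,a,b]` is a quaternion with polynomial coordinates, compatibly with
evaluation. -/
theorem exists_coordinate_polynomials (x : F) (q : ℍ[k, a, b][X]) :
    ∃ q₀ q₁ q₂ q₃ : k[X],
      evalCentral a b x q = ⟨aeval x q₀, aeval x q₁, aeval x q₂, aeval x q₃⟩ ∧
      ∀ m, q.coeff m = ⟨q₀.coeff m, q₁.coeff m, q₂.coeff m, q₃.coeff m⟩ := by
  induction q using Polynomial.induction_on' with
  | add p q hp hq =>
    obtain ⟨p₀, p₁, p₂, p₃, hpe, hpc⟩ := hp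
    obtain ⟨q₀, q₁, q₂, q₃, hqe, hqc⟩ := hq
    refine ⟨p₀ + q₀, p₁ + q₁, p₂ + q₂, p₃ + q₃, ?_, fun m => ?_⟩
    · rw [map_add, hpe, hqe]
      ext <;> simp
    · rw [coeff_add, hpc, hqc]
      ext <;> simp
  | monomial m c =>
    refine ⟨monomial m c.re, monomial m c.imI, monomial m c.imJ, monomial m c.imK, ?_,
      fun l => ?_⟩
    · rw [← C_mul_X_pow_eq_monomial, evalCentral_C_mul_X_pow]
      ext <;> simp [baseChange, aeval_monomial, mul_comm]
    · simp only [coeff_monomial]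
      split_ifs <;> ext <;> simp

variable (a b) in
/-- The quaternion `b·i + (a·x)·j + y·k`, which squares to zero when `y² = a·x² + b`. -/
def conicElement (x y : F) : ℍ[F, algebraMap k F a, algebraMap k F b] :=
  ⟨0, algebraMap k F b, algebraMap k F a * x, y⟩

theorem smul_conicElement {x y : F}
    (hxy : y ^ 2 = algebraMap k F a * x ^ 2 + algebraMap k F b) :
    y • conicElement a b x y =
      conicElement a b x y * evalCentral a b x (C ⟨0, 0, 1, 0⟩ - C ⟨0, 1, 0, 0⟩ * X) := by
  rw [map_sub, map_mul, evalCentral_C, evalCentral_C, evalCentral_X, mul_coe_eq_smul]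
  ext <;> simp [baseChange, conicElement] <;> first | ring1 | linear_combination hxy

theorem conicElement_mul_evalCentral_injective (ha : a ≠ 0) (hb : b ≠ 0) {x y : F}
    (hind : ∀ A B : k[X], aeval x A + y * aeval x B = 0 → B = 0) :
    Function.Injective fun q : ℍ[k, a, b][X] =>
      conicElement a b x y * evalCentral a b x q := by
  suffices h : ∀ q : ℍ[k, a, b][X],
      conicElement a b x y * evalCentral a b x q = 0 → q = 0 by
    intro p q hpq
    refine sub_eq_zero.mp (h _ ?_)
    rw [map_sub, mul_sub]
    exact sub_eq_zero.mpr hpq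
  intro q hq
  obtain ⟨q₀, q₁, q₂, q₃, hqe, hqc⟩ := exists_coordinate_polynomials x q
  rw [hqe, QuaternionAlgebra.ext_iff] at hq
  simp only [conicElement, re_mul, imI_mul, imJ_mul, imK_mul, re_zero, imI_zero, imJ_zero,
    imK_zero] at hq
  obtain ⟨h0, h1, h2, h3⟩ := hq
  have z0 : q₀ = 0 := by
    refine hind (C b * q₂ - C a * X * q₁) _ ?_
    simp only [map_sub, map_mul, aeval_C, aeval_X]
    linear_combination h3
  have z1 : C a * q₁ = 0 := by
    refine hind (-(C a * C b * q₃ + C a * X * q₀)) _ ?_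
    simp only [map_neg, map_add, map_mul, aeval_C, aeval_X]
    linear_combination -h2
  have z2 : C b * q₂ = 0 := by
    refine hind (C b * q₀ - C b * C a * X * q₃) _ ?_
    simp only [map_sub, map_mul, aeval_C, aeval_X]
    linear_combination h1
  have z3 : C a * C b * q₃ = 0 := by
    refine hind (-(C a * C b * q₁ + C b * C a * X * q₂)) _ ?_
    simp only [map_neg, map_add, map_mul, aeval_C, aeval_X]
    linear_combination -h0
  have e1 : q₁ = 0 := by simpa [ha] using z1
  have e2 : q₂ = 0 := by simpa [hb] using z2
  have e3 : q₃ = 0 := by simpa [ha, hb] using z3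
  ext m <;> simp [hqc, z0, e1, e2, e3]

/-- The polynomial over `ℍ[k,a,b]` by which `u(x) + v(x)·y` acts on `conicElement a b x y`. -/
noncomputable def actionPolynomial (a b : k) (u v : k[X]) : ℍ[k, a, b][X] :=
  u.map (algebraMap k ℍ[k, a, b]) +
    v.map (algebraMap k ℍ[k, a, b]) * (C ⟨0, 0, 1, 0⟩ - C ⟨0, 1, 0, 0⟩ * X)

theorem smul_conicElement_eq_mul_actionPolynomial {x y : F}
    (hxy : y ^ 2 = algebraMap k F a * x ^ 2 + algebraMap k F b) (u v : k[X]) :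
    (aeval x u + aeval x v * y) • conicElement a b x y =
      conicElement a b x y * evalCentral a b x (actionPolynomial a b u v) := by
  rw [actionPolynomial, map_add, map_mul, evalCentral_map, evalCentral_map, mul_add,
    mul_coe_eq_smul, add_smul, mul_smul, smul_conicElement hxy, coe_mul_eq_smul, mul_smul_comm]

theorem natDegree_actionPolynomial_le {u v : k[X]} {n : ℕ} (hu : u.natDegree ≤ n)
    (hv : v.natDegree + 1 ≤ n) : (actionPolynomial a b u v).natDegree ≤ n := by
  refine natDegree_add_le_of_degree_le (natDegree_map_le.trans hu) ?_
  refine (natDegree_mul_le_of_le natDegree_map_le ?_).trans hv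
  compute_degree

theorem coeff_succ_actionPolynomial {u v : k[X]} {m : ℕ} (hv : v.natDegree ≤ m) :
    (actionPolynomial a b u v).coeff (m + 1) = ⟨u.coeff (m + 1), -v.coeff m, 0, 0⟩ := by
  have h : v.coeff (m + 1) = 0 := coeff_eq_zero_of_natDegree_lt (by omega)
  rw [actionPolynomial, coeff_add, mul_sub, coeff_sub, coeff_mul_C, ← mul_assoc, coeff_mul_X,
    coeff_mul_C, coeff_map, coeff_map, coeff_map, h]
  ext <;> simp

end BaseChange

section AdjoinRoot

variable {k F : Type*} [Field k] [Field F] [Algebra k F] {p : k[X][X]}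
  [Algebra (AdjoinRoot p) F] [IsScalarTower k (AdjoinRoot p) F]

theorem algebraMap_of_eq_aeval (u : k[X]) :
    algebraMap (AdjoinRoot p) F (AdjoinRoot.of p u) =
      aeval (algebraMap (AdjoinRoot p) F (AdjoinRoot.of p X)) u := by
  have h : AdjoinRoot.of p u = aeval (AdjoinRoot.of p X) u := by
    have := aeval_algebraMap_apply (AdjoinRoot p) (X : k[X]) u
    rw [aeval_X_left_apply] at this
    exact this.symm
  rw [h, aeval_algebraMap_apply]

theorem exists_smul_conicElement_eq {a b : k} {x y : F}
    (hx : x = algebraMap (AdjoinRoot p) F (AdjoinRoot.of p X))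
    (hy : y = algebraMap (AdjoinRoot p) F (AdjoinRoot.root p))
    (hxy : y ^ 2 = algebraMap k F a * x ^ 2 + algebraMap k F b) (r : AdjoinRoot p) :
    ∃ h : ℍ[k, a, b][X], algebraMap (AdjoinRoot p) F r • conicElement a b x y =
      conicElement a b x y * evalCentral a b x h := by
  have hof (u : k[X]) : algebraMap (AdjoinRoot p) F (AdjoinRoot.of p u) = aeval x u := by
    rw [hx, algebraMap_of_eq_aeval]
  induction r using AdjoinRoot.induction_on with
  | ih P =>
    induction P using Polynomial.induction_on with
    | C u =>
      refine ⟨actionPolynomial a b u 0, ?_⟩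
      rw [← smul_conicElement_eq_mul_actionPolynomial hxy, AdjoinRoot.mk_C, hof]
      simp
    | add P Q hP hQ =>
      obtain ⟨g, hg⟩ := hP
      obtain ⟨h, hh⟩ := hQ
      exact ⟨g + h, by rw [map_add, map_add, add_smul, hg, hh, map_add, mul_add]⟩
    | monomial m u hu =>
      obtain ⟨h, hh⟩ := hu
      refine ⟨actionPolynomial a b 0 1 * h, ?_⟩
      rw [map_mul (evalCentral a b x), ← mul_assoc (conicElement a b x y),
        ← smul_conicElement_eq_mul_actionPolynomial hxy, pow_succ, ← mul_assoc (C u),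
        map_mul (AdjoinRoot.mk p), map_mul, AdjoinRoot.mk_X, ← hy, mul_comm, mul_smul, hh]
      simp

/-- The right ideal generated by `conicElement a b x y` in the quaternions over `R` consists of
the values `conicElement a b x y * q(x)` of polynomials `q` over `ℍ[k,a,b]`. -/
theorem exists_conicElement_mul_eq {a b : k} {x y : F}
    (hx : x = algebraMap (AdjoinRoot p) F (AdjoinRoot.of p X))
    (hy : y = algebraMap (AdjoinRoot p) F (AdjoinRoot.root p))
    (hxy : y ^ 2 = algebraMap k F a * x ^ 2 + algebraMap k F b) (r₀ r₁ r₂ r₃ : AdjoinRoot p) :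
    ∃ q : ℍ[k, a, b][X], conicElement a b x y *
        ⟨algebraMap _ F r₀, algebraMap _ F r₁, algebraMap _ F r₂, algebraMap _ F r₃⟩ =
      conicElement a b x y * evalCentral a b x q := by
  obtain ⟨h₀, e₀⟩ := exists_smul_conicElement_eq (a := a) (b := b) hx hy hxy r₀
  obtain ⟨h₁, e₁⟩ := exists_smul_conicElement_eq (a := a) (b := b) hx hy hxy r₁
  obtain ⟨h₂, e₂⟩ := exists_smul_conicElement_eq (a := a) (b := b) hx hy hxy r₂
  obtain ⟨h₃, e₃⟩ := exists_smul_conicElement_eq (a := a) (b := b) hx hy hxy r₃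
  refine ⟨h₀ + h₁ * C ⟨0, 1, 0, 0⟩ + h₂ * C ⟨0, 0, 1, 0⟩ + h₃ * C ⟨0, 0, 0, 1⟩, ?_⟩
  simp only [map_add, map_mul, mul_add, ← mul_assoc, ← e₀, ← e₁, ← e₂, ← e₃, evalCentral_C,
    smul_mul_assoc]
  simp only [← mul_smul_comm]
  nth_rewrite 2 [← mul_one (conicElement a b x y)]
  rw [← mul_smul_comm, ← mul_add, ← mul_add, ← mul_add]
  congr 1
  ext <;> simp [baseChange, Algebra.smul_def]

theorem eq_zero_of_aeval_add_mul_aeval_eq_zero [IsFractionRing (AdjoinRoot p) F]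
    (hp : p.Monic) (hdeg : p.natDegree = 2) (A B : k[X])
    (h : aeval (algebraMap (AdjoinRoot p) F (AdjoinRoot.of p X)) A +
      algebraMap (AdjoinRoot p) F (AdjoinRoot.root p) *
        aeval (algebraMap (AdjoinRoot p) F (AdjoinRoot.of p X)) B = 0) : B = 0 := by
  rw [← algebraMap_of_eq_aeval, ← algebraMap_of_eq_aeval, ← map_mul, ← map_add,
    map_eq_zero_iff _ (IsFractionRing.injective (AdjoinRoot p) F), mul_comm, add_comm,
    ← AdjoinRoot.mk_C, ← AdjoinRoot.mk_C, ← AdjoinRoot.mk_X, ← map_mul, ← map_add,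
    AdjoinRoot.mk_eq_zero] at h
  have h0 : C B * X + C A = 0 := by
    by_contra hne
    refine hp.not_dvd_of_natDegree_lt hne ?_ h
    rw [hdeg]
    exact natDegree_linear_le.trans_lt one_lt_two
  simpa using congrArg (fun P : k[X][X] => P.coeff 1) h0

end AdjoinRoot

end QuaternionAlgebra

namespace Polynomial

variable {A : Type*} [Ring A] {g : A[X]} {n : ℕ}

theorem monic_mul_C_of_isUnit_coeff (hg : g.natDegree ≤ n) {u : Aˣ} (hu : g.coeff n = u) :
    (g * C (↑u⁻¹ : A)).Monic := by
  refine monic_of_natDegree_le_of_coeff_eq_one n ?_ ?_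
  · exact (natDegree_mul_C_le _ _).trans hg
  · rw [coeff_mul_C, hu, Units.mul_inv]

theorem degree_mul_C_of_isUnit_coeff [Nontrivial A] (hg : g.natDegree ≤ n) {u : Aˣ}
    (hu : g.coeff n = u) : (g * C (↑u⁻¹ : A)).degree = n := by
  refine le_antisymm ?_ (le_degree_of_ne_zero ?_)
  · exact natDegree_le_iff_degree_le.mp ((natDegree_mul_C_le _ _).trans hg)
  · rw [coeff_mul_C, hu, Units.mul_inv]
    exact one_ne_zero

/-- Division with remainder by a polynomial whose leading coefficient is a unit. -/
theorem exists_eq_mul_add_of_isUnit_coeff [Nontrivial A] (hg : g.natDegree ≤ n)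
    (hu : IsUnit (g.coeff n)) (q : A[X]) : ∃ s r : A[X], q = g * s + r ∧ r.degree < n := by
  obtain ⟨u, hu⟩ := hu
  have hm := monic_mul_C_of_isUnit_coeff hg hu.symm
  refine ⟨C (↑u⁻¹ : A) * (q /ₘ (g * C (↑u⁻¹ : A))), q %ₘ (g * C (↑u⁻¹ : A)), ?_, ?_⟩
  · rw [← mul_assoc, add_comm, modByMonic_add_div]
  · rw [← degree_mul_C_of_isUnit_coeff hg hu.symm]
    exact degree_modByMonic_lt _ hm

theorem mul_eq_zero_of_degree_lt_of_isUnit_coeff [Nontrivial A] (hg : g.natDegree ≤ n)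
    (hu : IsUnit (g.coeff n)) {s : A[X]} (hs : (g * s).degree < n) : g * s = 0 := by
  obtain ⟨u, hu⟩ := hu
  have hm := monic_mul_C_of_isUnit_coeff hg hu.symm
  have hd := degree_mul_C_of_isUnit_coeff hg hu.symm
  have hsplit : g * s = g * C (↑u⁻¹ : A) * (C (u : A) * s) := by
    rw [mul_assoc, ← mul_assoc (C _), ← C_mul, Units.inv_mul, C_1, one_mul]
  have h₁ := (div_modByMonic_unique (f := g * s) 0 (g * s) hm ⟨by simp, hd ▸ hs⟩).2
  have h₂ := (div_modByMonic_unique (f := g * s) (C (u : A) * s) 0 hm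
    ⟨by rw [zero_add, ← hsplit], by simp [hd]⟩).2
  exact h₁.symm.trans h₂

end Polynomial

/-- Assume moreover that `D = ℍ[k,a,b]` is a division ring. Let `n ≥ 1` and let
`f = Σ_{α≤n} c_α x^α + Σ_{β≤n−1} d_β x^β y ∈ R` with `(c_n, d_{n−1}) ≠ (0,0)` (so
`v_∞(f) = −n`). Then the images of `e, e·x, …, e·x^{n−1}` form a basis of the quotient of
the right `D`-module `e·ℍ[R,a,b]` by `f·(e·ℍ[R,a,b])`: they are right-`D`-linearly
independent modulo `f·(e·ℍ[R,a,b])`, and every element of `e·ℍ[R,a,b]` is congruent modulo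
`f·(e·ℍ[R,a,b])` to a right `D`-linear combination of them. -/
theorem stmt11 {k : Type*} [Field k] (hchar : (2 : k) ≠ 0) (a b : k)
    (ha : a ≠ 0) (hb : b ≠ 0)
    (hdiv : ∀ q : ℍ[k, a, b], q ≠ 0 → IsUnit q)
    (p : Polynomial (Polynomial k))
    (hp : p = X ^ 2 - C (C a * X ^ 2 + C b))
    (hIrr : Irreducible p) [IsDomain (AdjoinRoot p)]
    (F : Type*) [Field F] [Algebra (AdjoinRoot p) F] [IsFractionRing (AdjoinRoot p) F]
    [Algebra k F] [IsScalarTower k (AdjoinRoot p) F]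
    (x y : F)
    (hx : x = algebraMap (AdjoinRoot p) F (AdjoinRoot.of p X))
    (hy : y = algebraMap (AdjoinRoot p) F (AdjoinRoot.root p))
    (e : ℍ[F, algebraMap k F a, algebraMap k F b])
    (he : e = ⟨0, algebraMap k F b, algebraMap k F a * x, y⟩)
    (HR : Set ℍ[F, algebraMap k F a, algebraMap k F b])
    (hHR : ∀ d : ℍ[F, algebraMap k F a, algebraMap k F b],
      d ∈ HR ↔ (d.re ∈ (algebraMap (AdjoinRoot p) F).range ∧
        d.imI ∈ (algebraMap (AdjoinRoot p) F).range ∧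
        d.imJ ∈ (algebraMap (AdjoinRoot p) F).range ∧
        d.imK ∈ (algebraMap (AdjoinRoot p) F).range))
    (ι : ℍ[k, a, b] → ℍ[F, algebraMap k F a, algebraMap k F b])
    (hι : ∀ q : ℍ[k, a, b], ι q =
      ⟨algebraMap k F q.re, algebraMap k F q.imI, algebraMap k F q.imJ, algebraMap k F q.imK⟩)
    (n : ℕ) (hn : 0 < n)
    (kc : Fin (n + 1) → k) (kd : Fin n → k)
    (hlead : ¬(kc (Fin.last n) = 0 ∧ kd ⟨n - 1, by omega⟩ = 0))
    (f : AdjoinRoot p)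
    (hf : f = (∑ α : Fin (n + 1),
          algebraMap k (AdjoinRoot p) (kc α) * AdjoinRoot.of p X ^ (α : ℕ))
        + ∑ β : Fin n,
          algebraMap k (AdjoinRoot p) (kd β) * AdjoinRoot.of p X ^ (β : ℕ)
            * AdjoinRoot.root p)
    (M fM : Set ℍ[F, algebraMap k F a, algebraMap k F b])
    (hM : ∀ t, t ∈ M ↔ ∃ d ∈ HR, t = e * d)
    (hfM : ∀ t, t ∈ fM ↔ ∃ m ∈ M, t = algebraMap (AdjoinRoot p) F f • m) :
    (∀ c : Fin n → ℍ[k, a, b],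
        (∑ α : Fin n, (x ^ (α : ℕ) • e) * ι (c α)) ∈ fM → ∀ α, c α = 0)
      ∧ (∀ t ∈ M, ∃ c : Fin n → ℍ[k, a, b],
          t - ∑ α : Fin n, (x ^ (α : ℕ) • e) * ι (c α) ∈ fM) := by
  subst hf
  have hpe : p = X ^ 2 + C (-(C a * X ^ 2 + C b)) := by rw [hp, C_neg, sub_eq_add_neg]
  have hmonic : p.Monic := hpe ▸ monic_X_pow_add_C _ two_ne_zero
  have hdeg : p.natDegree = 2 := hpe ▸ natDegree_X_pow_add_C
  have hof (u : k[X]) : algebraMap (AdjoinRoot p) F (AdjoinRoot.of p u) = aeval x u := by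
    rw [hx, QuaternionAlgebra.algebraMap_of_eq_aeval]
  have hxy : y ^ 2 = algebraMap k F a * x ^ 2 + algebraMap k F b := by
    have h : AdjoinRoot.mk p (X ^ 2 - C (C a * X ^ 2 + C b)) = 0 := by
      rw [← hp, AdjoinRoot.mk_self]
    rw [map_sub, map_pow, AdjoinRoot.mk_X, AdjoinRoot.mk_C, sub_eq_zero] at h
    have h' := congrArg (algebraMap (AdjoinRoot p) F) h
    rw [map_pow, ← hy, hof] at h'
    simpa using h'
  have he' : e = QuaternionAlgebra.conicElement a b x y := he
  have hι' : ∀ q, ι q = QuaternionAlgebra.baseChange a b q := hι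
  have hinj : Function.Injective fun q : ℍ[k, a, b][X] =>
      e * QuaternionAlgebra.evalCentral a b x q := by
    rw [he']
    refine QuaternionAlgebra.conicElement_mul_evalCentral_injective ha hb fun A B h => ?_
    rw [hx, hy] at h
    exact QuaternionAlgebra.eq_zero_of_aeval_add_mul_aeval_eq_zero hmonic hdeg A B h
  have hMiff (t) : t ∈ M ↔ ∃ q, t = e * QuaternionAlgebra.evalCentral a b x q := by
    rw [hM]
    constructor
    · rintro ⟨d, hd, rfl⟩
      obtain ⟨⟨r₀, h₀⟩, ⟨r₁, h₁⟩, ⟨r₂, h₂⟩, ⟨r₃, h₃⟩⟩ := (hHR d).mp hd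
      have hde : d = ⟨algebraMap _ F r₀, algebraMap _ F r₁, algebraMap _ F r₂,
          algebraMap _ F r₃⟩ := by
        ext <;> simp only [h₀, h₁, h₂, h₃]
      rw [hde, he']
      exact QuaternionAlgebra.exists_conicElement_mul_eq hx hy hxy r₀ r₁ r₂ r₃
    · rintro ⟨q, rfl⟩
      refine ⟨_, (hHR _).mpr ?_, rfl⟩
      obtain ⟨q₀, q₁, q₂, q₃, hq, -⟩ := QuaternionAlgebra.exists_coordinate_polynomials x q
      rw [hq]
      exact ⟨⟨_, hof q₀⟩, ⟨_, hof q₁⟩, ⟨_, hof q₂⟩, ⟨_, hof q₃⟩⟩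
  obtain ⟨m, rfl⟩ : ∃ m, n = m + 1 := ⟨n - 1, by omega⟩
  set u : k[X] := ∑ α : Fin (m + 2), C (kc α) * X ^ (α : ℕ) with hu
  set v : k[X] := ∑ β : Fin (m + 1), C (kd β) * X ^ (β : ℕ) with hv
  have hud : u.natDegree ≤ m + 1 := natDegree_sum_le_of_forall_le _ _ fun α _ =>
    (natDegree_C_mul_X_pow_le _ _).trans (by omega)
  have hvd : v.natDegree ≤ m := natDegree_sum_le_of_forall_le _ _ fun β _ =>
    (natDegree_C_mul_X_pow_le _ _).trans (by omega)
  have huc : u.coeff (m + 1) = kc (Fin.last (m + 1)) := by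
    rw [hu, finsetSum_coeff, Finset.sum_eq_single (Fin.last (m + 1))] <;>
      simp +contextual [coeff_X_pow, Fin.ext_iff, eq_comm]
  have hvc : v.coeff m = kd ⟨m, by omega⟩ := by
    rw [hv, finsetSum_coeff, Finset.sum_eq_single ⟨m, by omega⟩] <;>
      simp +contextual [coeff_X_pow, Fin.ext_iff, eq_comm]
  set g := QuaternionAlgebra.actionPolynomial a b u v
  have hgd : g.natDegree ≤ m + 1 :=
    QuaternionAlgebra.natDegree_actionPolynomial_le hud (by omega)
  have hgu : IsUnit (g.coeff (m + 1)) := by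
    refine hdiv _ fun h0 => hlead ?_
    rw [QuaternionAlgebra.coeff_succ_actionPolynomial hvd, huc, hvc,
      QuaternionAlgebra.ext_iff] at h0
    exact ⟨h0.1, neg_eq_zero.mp h0.2.1⟩
  have hfMiff (t) : t ∈ fM ↔ ∃ s, t = e * QuaternionAlgebra.evalCentral a b x (g * s) := by
    have hsmul (s : ℍ[k, a, b][X]) : algebraMap (AdjoinRoot p) F
        ((∑ α : Fin (m + 1 + 1),
          algebraMap k (AdjoinRoot p) (kc α) * AdjoinRoot.of p X ^ (α : ℕ))
        + ∑ β : Fin (m + 1),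
          algebraMap k (AdjoinRoot p) (kd β) * AdjoinRoot.of p X ^ (β : ℕ)
            * AdjoinRoot.root p) • (e * QuaternionAlgebra.evalCentral a b x s) =
        e * QuaternionAlgebra.evalCentral a b x (g * s) := by
      rw [map_mul, ← mul_assoc, he',
        ← QuaternionAlgebra.smul_conicElement_eq_mul_actionPolynomial hxy, smul_mul_assoc]
      congr 2
      simp only [hu, hv, map_add, map_sum, map_mul, map_pow, aeval_C, aeval_X, ← hx, ← hy,
        ← IsScalarTower.algebraMap_apply, Finset.sum_mul]
    rw [hfM]
    constructor
    · rintro ⟨w, hw, rfl⟩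
      obtain ⟨s, rfl⟩ := (hMiff w).mp hw
      exact ⟨s, hsmul s⟩
    · rintro ⟨s, rfl⟩
      exact ⟨_, (hMiff _).mpr ⟨s, rfl⟩, (hsmul s).symm⟩
  have hsum (c : Fin (m + 1) → ℍ[k, a, b]) : ∑ α : Fin (m + 1), (x ^ (α : ℕ) • e) * ι (c α) =
      e * QuaternionAlgebra.evalCentral a b x (∑ α : Fin (m + 1), C (c α) * X ^ (α : ℕ)) := by
    simp only [map_sum, QuaternionAlgebra.evalCentral_C_mul_X_pow, Finset.mul_sum, hι',
      mul_smul_comm, smul_mul_assoc]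
  refine ⟨fun c hc α => ?_, fun t ht => ?_⟩
  · obtain ⟨s, hs⟩ := (hfMiff _).mp hc
    rw [hsum] at hs
    have hs' := hinj hs
    have hlt : (∑ α : Fin (m + 1), C (c α) * X ^ (α : ℕ)).degree < ((m + 1 : ℕ) : WithBot ℕ) :=
      degree_sum_fin_lt c
    have h0 := mul_eq_zero_of_degree_lt_of_isUnit_coeff hgd hgu (hs' ▸ hlt)
    have hα := congrArg (fun P => P.coeff (α : ℕ)) (hs'.trans h0)
    simpa [finsetSum_coeff, coeff_X_pow, Fin.val_inj] using hα
  · obtain ⟨q, rfl⟩ := (hMiff t).mp ht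
    obtain ⟨s, r, rfl, hr⟩ := exists_eq_mul_add_of_isUnit_coeff hgd hgu q
    refine ⟨fun α => r.coeff α, (hfMiff _).mpr ⟨s, ?_⟩⟩
    have hrd : r.natDegree < m + 1 := by
      rcases eq_or_ne r 0 with rfl | h0
      · simp
      · exact (natDegree_lt_iff_degree_lt h0).mpr hr
    have hr' : ∑ α : Fin (m + 1), C (r.coeff α) * X ^ (α : ℕ) = r := by
      rw [Fin.sum_univ_eq_sum_range (fun i => C (r.coeff i) * X ^ i) (m + 1)]
      exact (as_sum_range_C_mul_X_pow' r hrd).symm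
    rw [hsum, hr', map_add, mul_add, add_sub_cancel_right]
end

section
/- For every nonzero pure quaternion q = i·q₀ + j·q₁ with q₀ ∈ k and q₁ ∈ K, q₁ ≠ 0, the following hold: (1) for all λ, μ ∈ K there exists f ∈ K such that conj(λ + j·μ) · q · (λ + j·μ) = f + j·(q₁·λ² − 2·i·q₀·λ·μ − b·q̄₁·μ²), where conj is quaternion conjugation; (2) the binary quadratic form over K defined by (λ, μ) ↦ q₁·λ² − 2·i·q₀·λ·μ − b·q̄₁·μ² is equivalent (isometric over K) to the diagonal quadratic form ⟨q₁, −q₁·(a·q₀² + b·q₁·q̄₁)⟩, i.e. to ⟨q₁⟩·⟨1, −q²⟩, since q² = a·q₀² + b·q₁·q̄₁. -/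
open Quaternion

/-- If `i² ∈ k` and `i` generates `K` over `k`, every element of `K` has the form `x + y·i`. -/
theorem exists_eq_algebraMap_add_mul_of_adjoin_eq_top {k K : Type*} [Field k] [Field K]
    [Algebra k K] {a : k} {i : K} (hi : i ^ 2 = algebraMap k K a)
    (hgen : Algebra.adjoin k {i} = ⊤) (c : K) :
    ∃ x y : k, c = algebraMap k K x + algebraMap k K y * i := by
  have hc : c ∈ Algebra.adjoin k {i} := hgen ▸ Algebra.mem_top
  induction hc using Algebra.adjoin_induction with
  | mem g hg => exact ⟨0, 1, by simpa using hg⟩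
  | algebraMap r => exact ⟨r, 0, by simp⟩
  | add u v _ _ hu hv =>
    obtain ⟨x, y, rfl⟩ := hu
    obtain ⟨z, w, rfl⟩ := hv
    exact ⟨x + z, y + w, by simp only [map_add]; ring⟩
  | mul u v _ _ hu hv =>
    obtain ⟨x, y, rfl⟩ := hu
    obtain ⟨z, w, rfl⟩ := hv
    refine ⟨x * z + y * w * a, x * w + y * z, ?_⟩
    simp only [map_add, map_mul, ← hi]
    ring

/-- The embedding `K → ℍ[k, a, b]` with `i ↦ i` in coordinates. -/
theorem quaternion_embedding_apply {k K : Type*} [Field k] [Field K] [Algebra k K] {a b : k}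
    {i : K} (ι : K →ₐ[k] ℍ[k, a, b]) (hι : ι i = ⟨0, 1, 0, 0⟩) (x y : k) :
    ι (algebraMap k K x + algebraMap k K y * i) = ⟨x, y, 0, 0⟩ := by
  rw [← Algebra.smul_def, map_add, map_smul, hι, AlgHom.commutes,
    QuaternionAlgebra.algebraMap_eq]
  ext <;> simp

/-- Completing the square: the form `p·l² − 2·r·l·m − s·m²` with `p ≠ 0` is equivalent to
`⟨p, −p·(r² + p·s)⟩`. -/
theorem equivalent_weightedSumSquares_of_binary {K : Type*} [Field K] {p r s : K} (hp : p ≠ 0)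
    (Q : QuadraticForm K (K × K))
    (hQ : ∀ l m : K, Q (l, m) = p * l ^ 2 - 2 * r * l * m - s * m ^ 2) :
    Q.Equivalent (QuadraticMap.weightedSumSquares K ![p, -(p * (r ^ 2 + p * s))]) := by
  refine ⟨{ toFun := fun v => ![v.1 - r / p * v.2, v.2 / p]
            invFun := fun w => (w 0 + r * w 1, p * w 1)
            map_add' := fun v w => ?_
            map_smul' := fun c v => ?_
            left_inv := fun v => ?_
            right_inv := fun w => ?_
            map_app' := fun v => ?_ }⟩
  · ext n
    fin_cases n <;> simp <;> ring
  · ext n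
    fin_cases n <;> simp <;> ring
  · ext <;> simp <;> field_simp
    ring
  · ext n
    fin_cases n <;> simp <;> field_simp
    ring
  · obtain ⟨l, m⟩ := v
    simp only [QuadraticMap.weightedSumSquares_apply, Fin.sum_univ_two, hQ]
    simp
    field_simp
    ring

/-- Let `K = k(i)` with `i² = a` (`a` a nonsquare), `conj` its nontrivial `k`-automorphism,
and `D = ℍ[k,a,b]` with `K ⊆ D` via `ι` (sending `i` to the quaternion `i`).  For every
nonzero pure quaternion `q = i·q₀ + j·q₁` with `q₀ ∈ k`, `q₁ ∈ K`, `q₁ ≠ 0`: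
(1) for all `λ, μ ∈ K` there is `f ∈ K` with
`conj(λ + j·μ) · q · (λ + j·μ) = f + j·(q₁λ² − 2iq₀λμ − b·conj(q₁)·μ²)`;
(2) the binary quadratic form `(λ, μ) ↦ q₁λ² − 2iq₀λμ − b·conj(q₁)·μ²` over `K` is
equivalent to the diagonal form `⟨q₁, −q₁·(aq₀² + b·q₁·conj(q₁))⟩ = ⟨q₁⟩·⟨1, −q²⟩`. -/
theorem stmt12 {k K : Type*} [Field k] [Field K] [Algebra k K]
    (hchar : (2 : k) ≠ 0) (a b : k) (hb : b ≠ 0) (hsq : ∀ c : k, c ^ 2 ≠ a)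
    (i : K) (hi : i ^ 2 = algebraMap k K a) (hgen : Algebra.adjoin k {i} = ⊤)
    (conj : K ≃ₐ[k] K) (hconj : conj i = -i)
    (ι : K →ₐ[k] ℍ[k, a, b]) (hι : ι i = ⟨0, 1, 0, 0⟩)
    (j : ℍ[k, a, b]) (hj : j = ⟨0, 0, 1, 0⟩)
    (q : ℍ[k, a, b]) (q₀ : k) (q₁ : K) (hq₁ : q₁ ≠ 0)
    (hq : q = q₀ • (⟨0, 1, 0, 0⟩ : ℍ[k, a, b]) + j * ι q₁)
    (Q₁ : QuadraticForm K (K × K))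
    (hQ₁ : ∀ l m : K, Q₁ (l, m) =
      q₁ * l ^ 2 - algebraMap k K (2 * q₀) * i * l * m
        - algebraMap k K b * conj q₁ * m ^ 2) :
    (∀ l m : K, ∃ f : K,
        star (ι l + j * ι m) * q * (ι l + j * ι m)
          = ι f + j * ι (q₁ * l ^ 2 - algebraMap k K (2 * q₀) * i * l * m
              - algebraMap k K b * conj q₁ * m ^ 2))
      ∧ Q₁.Equivalent (QuadraticMap.weightedSumSquares K
          ![q₁, -(q₁ * (algebraMap k K (a * q₀ ^ 2)
              + algebraMap k K b * (q₁ * conj q₁)))]) := by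
  constructor
  · have hstar (c : K) : star (ι c) = ι (conj c) := by
      obtain ⟨x, y, rfl⟩ := exists_eq_algebraMap_add_mul_of_adjoin_eq_top hi hgen c
      have h : conj (algebraMap k K x + algebraMap k K y * i)
          = algebraMap k K x + algebraMap k K (-y) * i := by simp [hconj]
      rw [h, quaternion_embedding_apply ι hι, quaternion_embedding_apply ι hι]
      ext <;> simp
    have hcomm (c : K) : ι c * j = j * ι (conj c) := by
      rw [← hstar]
      obtain ⟨x, y, rfl⟩ := exists_eq_algebraMap_add_mul_of_adjoin_eq_top hi hgen c
      rw [quaternion_embedding_apply ι hι, hj]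
      ext <;> simp
    have hconj_conj (c : K) : conj (conj c) = c :=
      ι.toRingHom.injective (by simp [← hstar])
    have hjj : j * j = ι (algebraMap k K b) := by
      rw [AlgHom.commutes, QuaternionAlgebra.algebraMap_eq, hj]
      ext <;> simp
    have hsj : star j = -j := by
      rw [hj]
      ext <;> simp
    have hmul (u v s t : K) : (ι u + j * ι v) * (ι s + j * ι t)
        = ι (u * s + algebraMap k K b * conj v * t) + j * ι (conj u * t + v * s) := by
      have h₁ : ι u * (j * ι t) = j * ι (conj u * t) := by
        rw [← mul_assoc, hcomm, mul_assoc, map_mul]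
      have h₂ : j * ι v * (j * ι t) = ι (algebraMap k K b * conj v * t) := by
        rw [mul_assoc, ← mul_assoc (ι v), hcomm, map_mul, map_mul, ← hjj]
        simp only [mul_assoc]
      rw [add_mul, mul_add, mul_add, h₁, h₂, mul_assoc j, ← map_mul, ← map_mul]
      simp only [map_add, mul_add]
      abel
    intro l m
    have hq' : q = ι (algebraMap k K q₀ * i) + j * ι q₁ := by
      rw [hq, ← hι, ← Algebra.smul_def, map_smul]
    have hs : star (ι l + j * ι m) = ι (conj l) + j * ι (-m) := by
      rw [star_add, star_mul, hstar, hstar, hsj, mul_neg, hcomm, hconj_conj, map_neg, mul_neg]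
    rw [hs, hq', mul_assoc, hmul, hmul]
    refine ⟨_, congrArg₂ (· + ·) rfl (congrArg (fun c => j * ι c) ?_)⟩
    simp only [hconj_conj, map_mul, hconj, AlgEquiv.commutes, map_ofNat]
    ring
  · have hr : (algebraMap k K q₀ * i) ^ 2 = algebraMap k K (a * q₀ ^ 2) := by
      rw [mul_pow, hi, map_mul, map_pow, mul_comm]
    convert equivalent_weightedSumSquares_of_binary (r := algebraMap k K q₀ * i)
      (s := algebraMap k K b * conj q₁) hq₁ Q₁ ?_ using 6
    · rw [hr]
      ring
    · intro l m
      rw [hQ₁, map_mul, map_ofNat]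
      ring
end

section
/- Assume in addition that a is not a square in k. Let λ₀, u₁, u₂ ∈ k with (u₁, u₂) ≠ (0, 0), and set f = λ₀ + u₁·x + u₂·y ∈ R. Then the quotient ring R/(f) is isomorphic as a k-algebra to k[T]/(T² − c), where c = a·λ₀² + b·u₁² − a·b·u₂². -/
open Polynomial

/-- The binary form `u² - a v²` is anisotropic when `a` is not a square. -/
theorem sq_sub_mul_sq_ne_zero {k : Type*} [Field k] {a u v : k} (ha : ∀ c : k, c ^ 2 ≠ a)
    (h : ¬(u = 0 ∧ v = 0)) : u ^ 2 - a * v ^ 2 ≠ 0 := by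
  intro h0
  by_cases hv : v = 0
  · exact h ⟨by simpa [hv] using h0, hv⟩
  · exact ha (u / v) (by field_simp; linear_combination h0)

/-- Let `k` be a field of characteristic `≠ 2`, `a, b ∈ k` nonzero with `a` not a square,
and let `R = k[X,Y]/(Y² − aX² − b)` (realized as `AdjoinRoot p` for
`p = Y² − (aX² + b) ∈ (k[X])[Y]`), with `x, y` the images of `X, Y`.  For
`λ₀, u₁, u₂ ∈ k` with `(u₁, u₂) ≠ (0,0)` and `f = λ₀ + u₁·x + u₂·y`, the quotient `R/(f)`
is isomorphic as a `k`-algebra to `k[T]/(T² − c)` where `c = aλ₀² + bu₁² − abu₂²`. -/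
theorem stmt13 {k : Type*} [Field k] (hchar : (2 : k) ≠ 0) (a b : k)
    (ha : a ≠ 0) (hb : b ≠ 0) (hsq : ∀ c : k, c ^ 2 ≠ a)
    (p : Polynomial (Polynomial k))
    (hp : p = X ^ 2 - C (C a * X ^ 2 + C b))
    (hIrr : Irreducible p)
    (lam0 u1 u2 : k) (hu : ¬(u1 = 0 ∧ u2 = 0))
    (f : AdjoinRoot p)
    (hf : f = algebraMap k (AdjoinRoot p) lam0
        + algebraMap k (AdjoinRoot p) u1 * AdjoinRoot.of p X
        + algebraMap k (AdjoinRoot p) u2 * AdjoinRoot.root p) :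
    Nonempty ((AdjoinRoot p ⧸ Ideal.span {f}) ≃ₐ[k]
      (Polynomial k ⧸ Ideal.span
        {(X : Polynomial k) ^ 2 - C (a * lam0 ^ 2 + b * u1 ^ 2 - a * b * u2 ^ 2)})) := by
  have hd : u1 ^ 2 - a * u2 ^ 2 ≠ 0 := sq_sub_mul_sq_ne_zero hsq hu
  subst hp hf
  set d := u1 ^ 2 - a * u2 ^ 2 with hd_def
  set c := a * lam0 ^ 2 + b * u1 ^ 2 - a * b * u2 ^ 2 with hc_def
  set p : k[X][X] := X ^ 2 - C (C a * X ^ 2 + C b)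
  set f : AdjoinRoot p := algebraMap k (AdjoinRoot p) lam0
    + algebraMap k (AdjoinRoot p) u1 * AdjoinRoot.of p X
    + algebraMap k (AdjoinRoot p) u2 * AdjoinRoot.root p
  let A := AdjoinRoot p ⧸ Ideal.span {f}
  let B := k[X] ⧸ Ideal.span {(X : k[X]) ^ 2 - C c}
  let t : B := Ideal.Quotient.mk _ X
  have ht : t ^ 2 = algebraMap k B c := by
    rw [← sub_eq_zero]
    exact Ideal.Quotient.eq_zero_iff_mem.2 (Ideal.mem_span_singleton_self _)
  let x : A := Ideal.Quotient.mk _ (AdjoinRoot.of p X)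
  let y : A := Ideal.Quotient.mk _ (AdjoinRoot.root p)
  have hline : algebraMap k A lam0 + algebraMap k A u1 * x + algebraMap k A u2 * y = 0 :=
    Ideal.Quotient.eq_zero_iff_mem.2 (Ideal.mem_span_singleton_self f)
  have hconic : y ^ 2 - (algebraMap k A a * x ^ 2 + algebraMap k A b) = 0 := by
    have h : AdjoinRoot.root p ^ 2 - (algebraMap k (AdjoinRoot p) a * AdjoinRoot.of p X ^ 2
        + algebraMap k (AdjoinRoot p) b) = 0 := by
      have h0 : AdjoinRoot.mk p (X ^ 2 - C (C a * X ^ 2 + C b)) = 0 := AdjoinRoot.mk_self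
      simpa [AdjoinRoot.algebraMap_eq', AdjoinRoot.mk_X, AdjoinRoot.mk_C] using h0
    exact congrArg (Ideal.Quotient.mk (Ideal.span {f})) h
  have hdA : algebraMap k A d⁻¹ * (algebraMap k A u1 ^ 2
      - algebraMap k A a * algebraMap k A u2 ^ 2) = 1 := by
    simp only [← map_pow, ← map_mul, ← map_sub, ← hd_def]
    rw [inv_mul_cancel₀ hd, map_one]
  have hdB : algebraMap k B d⁻¹ * (algebraMap k B u1 ^ 2
      - algebraMap k B a * algebraMap k B u2 ^ 2) = 1 := by
    simp only [← map_pow, ← map_mul, ← map_sub, ← hd_def]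
    rw [inv_mul_cancel₀ hd, map_one]
  have hcA : algebraMap k A c = algebraMap k A a * algebraMap k A lam0 ^ 2
      + algebraMap k A b * algebraMap k A u1 ^ 2
      - algebraMap k A a * algebraMap k A b * algebraMap k A u2 ^ 2 := by
    simp only [hc_def, map_pow, map_mul, map_sub, map_add]
  have hcB : algebraMap k B c = algebraMap k B a * algebraMap k B lam0 ^ 2
      + algebraMap k B b * algebraMap k B u1 ^ 2
      - algebraMap k B a * algebraMap k B b * algebraMap k B u2 ^ 2 := by
    simp only [hc_def, map_pow, map_mul, map_sub, map_add]
  rw [hcB] at ht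
  let x' : B := algebraMap k B d⁻¹ *
    (-(algebraMap k B lam0 * algebraMap k B u1) - algebraMap k B u2 * t)
  let y' : B := algebraMap k B d⁻¹ *
    (algebraMap k B u1 * t + algebraMap k B a * algebraMap k B u2 * algebraMap k B lam0)
  let t' : A := algebraMap k A u1 * y + algebraMap k A a * algebraMap k A u2 * x
  have hconic' : y' ^ 2 - (algebraMap k B a * x' ^ 2 + algebraMap k B b) = 0 := by
    simp only [x', y']
    generalize algebraMap k B d⁻¹ = e at *
    generalize algebraMap k B a = a at *
    generalize algebraMap k B b = b at *
    generalize algebraMap k B lam0 = l at *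
    generalize algebraMap k B u1 = u at *
    generalize algebraMap k B u2 = v at *
    linear_combination e ^ 2 * (u ^ 2 - a * v ^ 2) * ht
      + b * (e * (u ^ 2 - a * v ^ 2) + 1) * hdB
  have hline' : algebraMap k B lam0 + algebraMap k B u1 * x' + algebraMap k B u2 * y' = 0 := by
    simp only [x', y']
    linear_combination (-algebraMap k B lam0) * hdB
  have ht' : t' ^ 2 - algebraMap k A c = 0 := by
    rw [hcA]
    simp only [t']
    generalize algebraMap k A a = a at *
    generalize algebraMap k A b = b at *
    generalize algebraMap k A lam0 = l at *
    generalize algebraMap k A u1 = u at *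
    generalize algebraMap k A u2 = v at *
    linear_combination (u ^ 2 - a * v ^ 2) * hconic + a * (u * x + v * y - l) * hline
  let φ₀ : AdjoinRoot p →ₐ[k] B := AdjoinRoot.liftAlgHom p (aeval x') y' (by
    simpa [p, ← Polynomial.algebraMap_eq] using hconic')
  have hφ₀x : φ₀ (AdjoinRoot.of p X) = x' := by simp [φ₀]
  have hφ₀y : φ₀ (AdjoinRoot.root p) = y' := by simp [φ₀]
  let φ : A →ₐ[k] B := Ideal.Quotient.liftₐ _ φ₀ (by
    change Ideal.span {f} ≤ RingHom.ker φ₀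
    rw [Ideal.span_singleton_le_iff_mem, RingHom.mem_ker]
    simpa only [f, map_add, map_mul, AlgHom.commutes, hφ₀x, hφ₀y] using hline')
  let ψ : B →ₐ[k] A := Ideal.Quotient.liftₐ _ (aeval t') (by
    change Ideal.span {(X : k[X]) ^ 2 - C c} ≤ RingHom.ker (aeval t')
    rw [Ideal.span_singleton_le_iff_mem, RingHom.mem_ker]
    simpa only [map_sub, map_pow, aeval_X, aeval_C] using ht')
  have hφx : φ x = x' := hφ₀x
  have hφy : φ y = y' := hφ₀y
  have hψt : ψ t = t' := aeval_X t'
  refine ⟨AlgEquiv.ofAlgHom φ ψ ?_ ?_⟩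
  · refine Ideal.Quotient.algHom_ext _ (Polynomial.algHom_ext ?_)
    change φ (ψ t) = t
    simp only [hψt, t', map_add, map_mul, AlgHom.commutes, hφx, hφy, x', y']
    linear_combination t * hdB
  · refine Ideal.Quotient.algHom_ext _ (AdjoinRoot.algHom_ext' (Polynomial.algHom_ext ?_) ?_)
    · change ψ (φ x) = x
      simp only [hφx, x', map_sub, map_neg, map_mul, AlgHom.commutes, hψt, t']
      linear_combination x * hdA - algebraMap k A d⁻¹ * algebraMap k A u1 * hline
    · change ψ (φ y) = y
      simp only [hφy, y', map_add, map_mul, AlgHom.commutes, hψt, t']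
      linear_combination y * hdA
        + algebraMap k A d⁻¹ * algebraMap k A a * algebraMap k A u2 * hline
end
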